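/- Let Γ be a discrete, torsion-free subgroup of SL(2,ℝ) whose action on the hyperbolic upper half-plane ℍ² by Möbius transformations is cocompact, i.e., there is a compact set K ⊆ ℍ² whose Γ-translates cover ℍ². Let S be a finite generating set of Γ. Then there exists a constant K_{X,S} > 0 such that for all γ ∈ Γ: (1/K_{X,S})·τ_S(γ) − K_{X,S} ≤ τ(γ) ≤ K_{X,S}·τ_S(γ), where τ(γ) := inf_{x ∈ ℍ²} dist(γ·x, x) is the translation length of γ on ℍ² and τ_S(γ) is the translation length of γ on the Cayley graph of (Γ,S), namely the minimum, over all conjugates γ' of γ in Γ, of the word length of γ' with respect to S ∪ S⁻¹ (the least n such that γ' is a product of n elements of S ∪ S⁻¹). -/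

import Mathlib

/-!
The statement is the Milnor–Švarc comparison of word length and orbit displacement, made invariant
under conjugation. Let `Γ = ⟨S⟩` act isometrically, properly discontinuously and cocompactly on a
proper geodesic space `X`.

* An element that is a word of length `n` in `S ∪ S⁻¹` displaces a base point by at most `n * M`,
  where `M` bounds the displacement by the generators. Choosing the shortest conjugate gives the
  upper bound on the translation length.
* Let `K` be a compact set whose translates cover `X`. Only finitely many elements of `Γ` bring `K`
  within distance `1` of itself; let `L` bound their word lengths. Walking along a geodesic from
  `y ∈ K` to `g • y` in steps of length at most `1`, and replacing each stop by a translate of `K`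
  through it, writes `g` as a product of at most `dist y (g • y) + 1` such elements. Every `x : X`
  lies in `δ • K` for some `δ ∈ Γ`, so applying this to `δ⁻¹ * g * δ` gives the lower bound.

The hyperbolic plane is geodesic because any two of its points can be moved by `SL(2, ℝ)` onto a
common vertical line, which is an isometric copy of `ℝ`.
-/

open UpperHalfPlane

/-- `SL(2,ℝ)` with its natural topology, induced from the space of `2 × 2` real matrices. -/
instance : TopologicalSpace (Matrix.SpecialLinearGroup (Fin 2) ℝ) :=
  TopologicalSpace.induced (fun g : Matrix.SpecialLinearGroup (Fin 2) ℝ => (g : Matrix (Fin 2) (Fin 2) ℝ))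
    inferInstance

/-- The word length of `γ` with respect to `S ∪ S⁻¹`: the least `n` such that `γ` is a
product of `n` elements of `S ∪ S⁻¹` (the identity having word length `0`). -/
noncomputable def wordLength (S : Finset (Matrix.SpecialLinearGroup (Fin 2) ℝ))
    (γ : Matrix.SpecialLinearGroup (Fin 2) ℝ) : ℕ :=
  sInf {n : ℕ | ∃ l : List (Matrix.SpecialLinearGroup (Fin 2) ℝ),
    l.length = n ∧ (∀ a ∈ l, a ∈ S ∨ a⁻¹ ∈ S) ∧ l.prod = γ}

/-- The translation length of `γ` on the Cayley graph of `(Γ, S)`: the minimum, over all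
conjugates of `γ` in `Γ`, of the word length with respect to `S ∪ S⁻¹`. -/
noncomputable def cayleyTranslationLength (S : Finset (Matrix.SpecialLinearGroup (Fin 2) ℝ))
    (Γ : Subgroup (Matrix.SpecialLinearGroup (Fin 2) ℝ))
    (γ : Matrix.SpecialLinearGroup (Fin 2) ℝ) : ℕ :=
  sInf {n : ℕ | ∃ δ ∈ Γ, wordLength S (δ * γ * δ⁻¹) = n}

open Set
open scoped MatrixGroups NNReal

/-- A geodesic space: any two points are joined by a geodesic, encoded by its parametrization on
`[0, 1]` proportional to arc length (the values of `c` outside `[0, 1]` are irrelevant). -/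
class GeodesicSpace (X : Type*) [PseudoMetricSpace X] : Prop where
  exists_geodesic (x y : X) : ∃ c : ℝ → X, c 0 = x ∧ c 1 = y ∧
    ∀ s ∈ Icc (0 : ℝ) 1, ∀ t ∈ Icc (0 : ℝ) 1, dist (c s) (c t) = dist s t * dist x y

namespace GeodesicSpace

variable {X : Type*} [PseudoMetricSpace X]

theorem of_exists_isometry
    (h : ∀ x y : X, ∃ c : ℝ → X, Isometry c ∧ x ∈ range c ∧ y ∈ range c) : GeodesicSpace X where
  exists_geodesic x y := by
    obtain ⟨c, hc, ⟨a, rfl⟩, b, rfl⟩ := h x y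
    refine ⟨fun t => c (AffineMap.lineMap a b t), by simp, by simp, fun s _ t _ => ?_⟩
    rw [hc.dist_eq, hc.dist_eq, dist_lineMap_lineMap]

theorem exists_dist_le_dist_le [GeodesicSpace X] {x y : X} {r s : ℝ} (hr : 0 ≤ r) (hs : 0 < s)
    (h : dist x y ≤ r + s) : ∃ z, dist x z ≤ r ∧ dist z y ≤ s := by
  obtain ⟨c, rfl, rfl, hc⟩ := exists_geodesic x y
  have hrs : 0 < r + s := by positivity
  have ht : r / (r + s) ∈ Icc (0 : ℝ) 1 := ⟨by positivity, (div_le_one hrs).2 (by linarith)⟩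
  have hd : dist (c 0) (c 1) / (r + s) ≤ 1 := (div_le_one hrs).2 h
  refine ⟨c (r / (r + s)), ?_, ?_⟩
  · calc dist (c 0) (c (r / (r + s)))
        = r * (dist (c 0) (c 1) / (r + s)) := by
          rw [hc _ (left_mem_Icc.2 zero_le_one) _ ht, dist_zero_left, Real.norm_of_nonneg ht.1]
          ring
      _ ≤ r := mul_le_of_le_one_right hr hd
  · calc dist (c (r / (r + s))) (c 1)
        = s * (dist (c 0) (c 1) / (r + s)) := by
          rw [hc _ ht _ (right_mem_Icc.2 zero_le_one), dist_comm, Real.dist_eq,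
            abs_of_nonneg (sub_nonneg.2 ht.2), one_sub_div hrs.ne']
          ring
      _ ≤ s := mul_le_of_le_one_right hs.le hd

end GeodesicSpace

section WordNorm

variable {G : Type*} [Group G] {S : Set G} {g h : G}

/-- The word length of `g` with respect to `S ∪ S⁻¹`, for a subset `S` of any group; it is the
junk value `0` when `g` is not in the subgroup generated by `S`. For a finite `S` in `SL(2, ℝ)` it
unfolds to `wordLength S g`. -/
noncomputable def wordNorm (S : Set G) (g : G) : ℕ :=
  sInf {n : ℕ | ∃ l : List G, l.length = n ∧ (∀ a ∈ l, a ∈ S ∨ a⁻¹ ∈ S) ∧ l.prod = g}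

/-- The translation length of `g` on the Cayley graph of the subgroup generated by `S`: the least
word length of the conjugates of `g` by that subgroup. For a finite `S` in `SL(2, ℝ)` it unfolds to
`cayleyTranslationLength S (Subgroup.closure S) g`. -/
noncomputable def conjWordNorm (S : Set G) (g : G) : ℕ :=
  sInf {n : ℕ | ∃ h ∈ Subgroup.closure S, wordNorm S (h * g * h⁻¹) = n}

theorem wordNorm_list_prod_le {l : List G} (hl : ∀ a ∈ l, a ∈ S ∨ a⁻¹ ∈ S) :
    wordNorm S l.prod ≤ l.length :=
  Nat.sInf_le ⟨l, rfl, hl, rfl⟩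

theorem exists_list_length_eq_wordNorm (hg : g ∈ Subgroup.closure S) :
    ∃ l : List G, l.length = wordNorm S g ∧ (∀ a ∈ l, a ∈ S ∨ a⁻¹ ∈ S) ∧ l.prod = g := by
  rw [← Subgroup.mem_toSubmonoid, Subgroup.closure_toSubmonoid] at hg
  obtain ⟨l, hl, hprod⟩ := Submonoid.exists_list_of_mem_closure hg
  exact Nat.sInf_mem (s := {n : ℕ | ∃ l : List G, l.length = n ∧ _}) ⟨l.length, l, rfl, hl, hprod⟩

theorem wordNorm_mul_le (hg : g ∈ Subgroup.closure S) (hh : h ∈ Subgroup.closure S) :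
    wordNorm S (g * h) ≤ wordNorm S g + wordNorm S h := by
  obtain ⟨l, hl, hlS, rfl⟩ := exists_list_length_eq_wordNorm hg
  obtain ⟨m, hm, hmS, rfl⟩ := exists_list_length_eq_wordNorm hh
  rw [← hl, ← hm, ← List.prod_append, ← List.length_append]
  exact wordNorm_list_prod_le (List.forall_mem_append.2 ⟨hlS, hmS⟩)

theorem conjWordNorm_le (hh : h ∈ Subgroup.closure S) :
    conjWordNorm S g ≤ wordNorm S (h * g * h⁻¹) :=
  Nat.sInf_le ⟨h, hh, rfl⟩

theorem exists_wordNorm_conj_eq_conjWordNorm (S : Set G) (g : G) :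
    ∃ h ∈ Subgroup.closure S, wordNorm S (h * g * h⁻¹) = conjWordNorm S g :=
  Nat.sInf_mem (s := {n : ℕ | ∃ h ∈ Subgroup.closure S, wordNorm S (h * g * h⁻¹) = n})
    ⟨_, 1, one_mem _, rfl⟩

end WordNorm

section TranslationLength

variable {G X : Type*} [Group G] [PseudoMetricSpace X] [MulAction G X]

/-- The translation length `inf_x dist (g • x) x` of `g` acting on the metric space `X`. -/
noncomputable def translationLength (X : Type*) [PseudoMetricSpace X] [MulAction G X] (g : G) : ℝ :=
  ⨅ x : X, dist (g • x) x

theorem translationLength_le_dist (g : G) (x : X) : translationLength X g ≤ dist (g • x) x :=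
  ciInf_le ⟨0, forall_mem_range.2 fun _ => dist_nonneg⟩ x

variable [IsIsometricSMul G X]

theorem dist_conj_smul (g h : G) (x : X) :
    dist ((h * g * h⁻¹) • x) x = dist (g • h⁻¹ • x) (h⁻¹ • x) := by
  rw [mul_smul, mul_smul, ← dist_smul h (g • h⁻¹ • x), smul_inv_smul]

theorem translationLength_conj (g h : G) :
    translationLength X (h * g * h⁻¹) = translationLength X g := by
  simp only [translationLength, dist_conj_smul]
  exact (MulAction.surjective h⁻¹).iInf_comp fun x : X => dist (g • x) x

end TranslationLength

section OrbitMap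

variable {G X : Type*} [Group G] [PseudoMetricSpace X] [MulAction G X] [IsIsometricSMul G X]
  {S : Set G} {g : G} {x : X} {M : ℝ}

theorem dist_list_prod_smul_le {l : List G} (hM : ∀ a ∈ l, dist (a • x) x ≤ M) :
    dist (l.prod • x) x ≤ l.length * M := by
  induction l with
  | nil => simp
  | cons a l ih =>
    obtain ⟨ha, hl⟩ := List.forall_mem_cons.1 hM
    calc dist ((a :: l).prod • x) x
        ≤ dist (a • l.prod • x) (a • x) + dist (a • x) x := by
          rw [List.prod_cons, mul_smul]
          exact dist_triangle _ _ _
      _ ≤ l.length * M + M := by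
          rw [dist_smul]
          exact add_le_add (ih hl) ha
      _ = (a :: l).length * M := by
          rw [List.length_cons]
          push_cast
          ring

theorem dist_smul_le_wordNorm_mul (hM : ∀ s ∈ S, dist (s • x) x ≤ M)
    (hg : g ∈ Subgroup.closure S) :
    dist (g • x) x ≤ wordNorm S g * M := by
  obtain ⟨l, hl, hlS, rfl⟩ := exists_list_length_eq_wordNorm hg
  rw [← hl]
  refine dist_list_prod_smul_le fun a ha => ?_
  rcases hlS a ha with haS | haS
  · exact hM a haS
  · rw [← dist_smul a⁻¹, inv_smul_smul, dist_comm]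
    exact hM _ haS

variable (X) in
theorem exists_translationLength_le_mul_conjWordNorm [Nonempty X] (hS : S.Finite) :
    ∃ M : ℝ≥0, ∀ g ∈ Subgroup.closure S, translationLength X g ≤ M * conjWordNorm S g := by
  obtain ⟨x⟩ := ‹Nonempty X›
  obtain ⟨M, hM⟩ := (hS.image fun s => nndist (s • x) x).bddAbove
  refine ⟨M, fun g hg => ?_⟩
  obtain ⟨h, hh, hmin⟩ := exists_wordNorm_conj_eq_conjWordNorm S g
  calc translationLength X g
      = translationLength X (h * g * h⁻¹) := (translationLength_conj g h).symm
    _ ≤ dist ((h * g * h⁻¹) • x) x := translationLength_le_dist _ x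
    _ ≤ wordNorm S (h * g * h⁻¹) * M :=
      dist_smul_le_wordNorm_mul (fun s hs => hM (mem_image_of_mem _ hs))
        (mul_mem (mul_mem hh hg) (inv_mem hh))
    _ = M * conjWordNorm S g := by rw [hmin, mul_comm]

end OrbitMap

theorem finite_setOf_exists_dist_smul_le {Γ X : Type*} [PseudoMetricSpace X] [ProperSpace X]
    [SMul Γ X] [ProperlyDiscontinuousSMul Γ X] {K : Set X} (hK : IsCompact K) (r : ℝ) :
    {g : Γ | ∃ x ∈ K, ∃ y ∈ K, dist x (g • y) ≤ r}.Finite := by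
  refine (ProperlyDiscontinuousSMul.finite_disjoint_inter_image hK
    (hK.cthickening (r := r))).subset ?_
  rintro g ⟨x, hx, y, hy, hxy⟩
  rw [dist_comm] at hxy
  exact ⟨g • y, mem_image_of_mem _ hy, Metric.mem_cthickening_of_dist_le _ x r K hx hxy⟩

section MilnorSvarc

variable {G X : Type*} [Group G] [PseudoMetricSpace X] [MulAction G X] [IsIsometricSMul G X]
  [GeodesicSpace X] {S : Set G} {K : Set X}

theorem wordNorm_le_of_dist_le
    (hcover : ∀ x : X, ∃ g ∈ Subgroup.closure S, ∃ y ∈ K, g • y = x) {L : ℕ}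
    (hL : ∀ g ∈ Subgroup.closure S, ∀ x ∈ K, ∀ y ∈ K, dist x (g • y) ≤ 1 → wordNorm S g ≤ L)
    (n : ℕ) :
    ∀ g ∈ Subgroup.closure S, ∀ x ∈ K, ∀ y ∈ K, dist x (g • y) ≤ n + 1 →
      wordNorm S g ≤ L * (n + 1) := by
  induction n with
  | zero => simpa using hL
  | succ n ih =>
    intro g hg x hx y hy hxy
    obtain ⟨z, hxz, hzy⟩ :=
      GeodesicSpace.exists_dist_le_dist_le (Nat.cast_nonneg (n + 1)) one_pos hxy
    obtain ⟨h, hh, w, hw, rfl⟩ := hcover z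
    have hhg : h⁻¹ * g ∈ Subgroup.closure S := mul_mem (inv_mem hh) hg
    have hstep : wordNorm S (h⁻¹ * g) ≤ L :=
      hL _ hhg w hw y hy (by rwa [mul_smul, ← dist_smul h, smul_inv_smul])
    calc wordNorm S g = wordNorm S (h * (h⁻¹ * g)) := by rw [mul_inv_cancel_left]
      _ ≤ wordNorm S h + wordNorm S (h⁻¹ * g) := wordNorm_mul_le hh hhg
      _ ≤ L * (n + 1) + L := add_le_add (ih h hh x hx w hw (by exact_mod_cast hxz)) hstep
      _ = L * (n + 1 + 1) := by ring

variable [ProperSpace X] [ProperlyDiscontinuousSMul (Subgroup.closure S) X]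

theorem exists_wordNorm_le_mul_dist_add_one (hK : IsCompact K)
    (hcover : ∀ x : X, ∃ g ∈ Subgroup.closure S, ∃ y ∈ K, g • y = x) :
    ∃ L : ℕ, ∀ g ∈ Subgroup.closure S, ∀ y ∈ K, (wordNorm S g : ℝ) ≤ L * (dist (g • y) y + 1) := by
  obtain ⟨L, hL⟩ := ((finite_setOf_exists_dist_smul_le hK 1).image
    fun g : Subgroup.closure S => wordNorm S (g : G)).bddAbove
  refine ⟨L, fun g hg y hy => ?_⟩
  set n := ⌊dist (g • y) y⌋₊
  have hn : wordNorm S g ≤ L * (n + 1) :=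
    wordNorm_le_of_dist_le hcover
      (fun h hh x hx z hz hxz => hL ⟨⟨h, hh⟩, ⟨x, hx, z, hz, hxz⟩, rfl⟩) n g hg y hy y hy
      (by rw [dist_comm]; exact (Nat.lt_floor_add_one _).le)
  calc (wordNorm S g : ℝ) ≤ L * (n + 1) := by exact_mod_cast hn
    _ ≤ L * (dist (g • y) y + 1) := by
      gcongr
      exact Nat.floor_le dist_nonneg

theorem exists_conjWordNorm_le_mul_translationLength_add_one [Nonempty X] (hK : IsCompact K)
    (hcover : ∀ x : X, ∃ g ∈ Subgroup.closure S, ∃ y ∈ K, g • y = x) :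
    ∃ L : ℕ, ∀ g ∈ Subgroup.closure S,
      (conjWordNorm S g : ℝ) ≤ L * (translationLength X g + 1) := by
  obtain ⟨L, hL⟩ := exists_wordNorm_le_mul_dist_add_one hK hcover
  refine ⟨L, fun g hg => ?_⟩
  rw [mul_add_one, ← sub_le_iff_le_add, translationLength, Real.mul_iInf_of_nonneg L.cast_nonneg]
  refine le_ciInf fun x => ?_
  obtain ⟨h, hh, y, hy, rfl⟩ := hcover x
  rw [sub_le_iff_le_add, ← mul_add_one]
  calc (conjWordNorm S g : ℝ) ≤ wordNorm S (h⁻¹ * g * h⁻¹⁻¹) := by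
        exact_mod_cast conjWordNorm_le (inv_mem hh)
    _ ≤ L * (dist ((h⁻¹ * g * h⁻¹⁻¹) • y) y + 1) :=
        hL _ (mul_mem (mul_mem (inv_mem hh) hg) (inv_mem (inv_mem hh))) y hy
    _ = L * (dist (g • h • y) (h • y) + 1) := by rw [dist_conj_smul, inv_inv]

end MilnorSvarc

theorem translation_length_comparison_cocompact_general {G X : Type*} [Group G]
    [PseudoMetricSpace X] [ProperSpace X] [GeodesicSpace X] [Nonempty X]
    [MulAction G X] [IsIsometricSMul G X]
    {S : Set G} (hS : S.Finite) [ProperlyDiscontinuousSMul (Subgroup.closure S) X]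
    {K : Set X} (hK : IsCompact K)
    (hcover : ∀ x : X, ∃ g ∈ Subgroup.closure S, ∃ y ∈ K, g • y = x) :
    ∃ C : ℝ, 0 < C ∧ ∀ g ∈ Subgroup.closure S,
      (1 / C) * (conjWordNorm S g : ℝ) - C ≤ translationLength X g ∧
        translationLength X g ≤ C * (conjWordNorm S g : ℝ) := by
  obtain ⟨L, hL⟩ := exists_conjWordNorm_le_mul_translationLength_add_one hK hcover
  obtain ⟨M, hM⟩ := exists_translationLength_le_mul_conjWordNorm X hS
  have hpos : (0 : ℝ) < L + M + 1 := by positivity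
  refine ⟨L + M + 1, hpos, fun g hg => ⟨?_, (hM g hg).trans ?_⟩⟩
  · have hnonneg : 0 ≤ translationLength X g := Real.iInf_nonneg fun _ => dist_nonneg
    have hbound : (1 / (L + M + 1)) * (conjWordNorm S g : ℝ) ≤ translationLength X g + 1 := by
      rw [one_div, inv_mul_le_iff₀ hpos]
      refine (hL g hg).trans ?_
      gcongr
      linarith [M.coe_nonneg]
    linarith [M.coe_nonneg, L.cast_nonneg (α := ℝ)]
  · gcongr
    linarith [L.cast_nonneg (α := ℝ)]

section HyperbolicPlane

/-- The Möbius transformation `z ↦ -1 / (z - e)`, which sends the real boundary point `e` to `∞`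
and hence turns the geodesics ending at `e` into vertical half-lines. -/
def moebiusToInfty (e : ℝ) : SL(2, ℝ) :=
  ⟨!![0, -1; 1, -e], by simp [Matrix.det_fin_two]⟩

theorem coe_moebiusToInfty_smul (e : ℝ) (z : ℍ) :
    ((moebiusToInfty e • z : ℍ) : ℂ) = -1 / (z - e) := by
  rw [coe_specialLinearGroup_apply]
  simp [moebiusToInfty, ← sub_eq_add_neg]

theorem re_moebiusToInfty_smul (e : ℝ) (z : ℍ) :
    (moebiusToInfty e • z).re = -(z.re - e) / Complex.normSq (z - e) := by
  rw [← coe_re, coe_moebiusToInfty_smul, Complex.div_re]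
  simp

theorem re_moebiusToInfty_smul_of_mem_semicircle {c r : ℝ} {z : ℍ}
    (hz : (z.re - c) ^ 2 + z.im ^ 2 = r ^ 2) :
    (moebiusToInfty (c - r) • z).re = -1 / (2 * r) := by
  have hnormSq : Complex.normSq (z - (c - r : ℝ)) = 2 * r * (z.re - (c - r)) := by
    rw [Complex.normSq_apply]
    simp only [Complex.sub_re, Complex.sub_im, coe_re, coe_im, Complex.ofReal_re, Complex.ofReal_im]
    linarith
  have hpos : 0 < Complex.normSq (z - (c - r : ℝ)) :=
    Complex.normSq_pos.2 (sub_ne_zero.2 (z.ne_ofReal _))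
  have hne : 2 * r * (z.re - (c - r)) ≠ 0 := hnormSq ▸ hpos.ne'
  rw [re_moebiusToInfty_smul, hnormSq, div_eq_div_iff hne (left_ne_zero_of_mul hne)]
  ring

theorem exists_semicircle_of_re_ne {z w : ℍ} (h : z.re ≠ w.re) :
    ∃ c r : ℝ, (z.re - c) ^ 2 + z.im ^ 2 = r ^ 2 ∧ (w.re - c) ^ 2 + w.im ^ 2 = r ^ 2 := by
  have hne : z.re - w.re ≠ 0 := sub_ne_zero.2 h
  let c : ℝ := (z.re ^ 2 + z.im ^ 2 - w.re ^ 2 - w.im ^ 2) / (2 * (z.re - w.re))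
  have hc : c * (2 * (z.re - w.re)) = z.re ^ 2 + z.im ^ 2 - w.re ^ 2 - w.im ^ 2 :=
    div_mul_cancel₀ _ (mul_ne_zero two_ne_zero hne)
  refine ⟨c, √((z.re - c) ^ 2 + z.im ^ 2), ?_, ?_⟩ <;> rw [Real.sq_sqrt (by positivity)]
  linarith

theorem exists_re_smul_eq_re_smul (z w : ℍ) : ∃ g : SL(2, ℝ), (g • z).re = (g • w).re := by
  by_cases h : z.re = w.re
  · exact ⟨1, by simpa using h⟩
  · obtain ⟨c, r, hz, hw⟩ := exists_semicircle_of_re_ne h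
    exact ⟨moebiusToInfty (c - r), by
      rw [re_moebiusToInfty_smul_of_mem_semicircle hz, re_moebiusToInfty_smul_of_mem_semicircle hw]⟩

theorem mem_range_vertical_line {a : ℝ} {z : ℍ} (hz : z.re = a) :
    z ∈ range fun y => UpperHalfPlane.mk ⟨a, Real.exp y⟩ (Real.exp_pos y) :=
  ⟨Real.log z.im, UpperHalfPlane.ext (Complex.ext hz.symm (Real.exp_log z.im_pos))⟩

instance : GeodesicSpace ℍ := .of_exists_isometry fun z w => by
  obtain ⟨g, hg⟩ := exists_re_smul_eq_re_smul z w
  refine ⟨_, (isometry_smul ℍ g⁻¹).comp (isometry_vertical_line (g • w).re), ?_, ?_⟩ <;>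
    rw [range_comp, image_smul, mem_inv_smul_set_iff]
  · exact mem_range_vertical_line hg
  · exact mem_range_vertical_line rfl

-- Instance search misses `instProperlyDiscontinuousSL2RSubgroup` for the topology on `SL(2, ℝ)`
-- declared above, which unfolds to the one in Mathlib.
instance (Γ : Subgroup SL(2, ℝ)) [hΓ : DiscreteTopology Γ] :
    ProperlyDiscontinuousSMul Γ ℍ :=
  @instProperlyDiscontinuousSL2RSubgroup Γ hΓ

end HyperbolicPlane

/-- For a discrete, torsion-free, cocompact subgroup `Γ` of `SL(2,ℝ)` with finite generating
set `S`, the translation length on the hyperbolic plane and the translation length on the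
Cayley graph agree up to uniform multiplicative and additive constants. -/
theorem translation_length_comparison_cocompact
    (Γ : Subgroup (Matrix.SpecialLinearGroup (Fin 2) ℝ))
    (hdisc : DiscreteTopology Γ)
    (htf : ∀ γ : Matrix.SpecialLinearGroup (Fin 2) ℝ,
      γ ∈ Γ → γ ≠ 1 → ∀ n : ℕ, 0 < n → γ ^ n ≠ 1)
    (K : Set UpperHalfPlane) (hK : IsCompact K)
    (hcover : ∀ x : UpperHalfPlane, ∃ γ ∈ Γ, ∃ y ∈ K, γ • y = x)
    (S : Finset (Matrix.SpecialLinearGroup (Fin 2) ℝ))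
    (hSΓ : ↑S ⊆ (Γ : Set (Matrix.SpecialLinearGroup (Fin 2) ℝ)))
    (hgen : Subgroup.closure (↑S : Set (Matrix.SpecialLinearGroup (Fin 2) ℝ)) = Γ) :
    ∃ C : ℝ, 0 < C ∧ ∀ γ ∈ Γ,
      (1 / C) * (cayleyTranslationLength S Γ γ : ℝ) - C
          ≤ (⨅ x : UpperHalfPlane, dist (γ • x) x) ∧
      (⨅ x : UpperHalfPlane, dist (γ • x) x)
          ≤ C * (cayleyTranslationLength S Γ γ : ℝ) := by
  subst hgen
  exact translation_length_comparison_cocompact_general S.finite_toSet hK hcover
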